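/- Let R be a Noetherian local ring, M and N nonzero finitely generated R-modules with Tor_i^R(M, N) = 0 for all i ≥ 1, and suppose pd_R(M) < ∞. Then depth_R(M) + depth_R(N) = depth(R) + depth_R(M ⊗_R N) (the depth formula). -/

import Mathlib

open RingTheory.Sequence IsLocalRing CategoryTheory CategoryTheory.Limits
open scoped TensorProduct

/-- The `I`-depth of the module `M`: the supremum of the lengths of
(weakly) regular sequences on `M` consisting of elements of `I`.
(When `IM ≠ M` this is the common length of maximal `M`-regular sequences in `I`;
when `IM = M`, in particular when `M = 0`, it is `∞`, matching the usual convention.) -/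
noncomputable def rdepth {R : Type*} [CommRing R] (I : Ideal R)
    (M : Type*) [AddCommGroup M] [Module R M] : ℕ∞ :=
  sSup {n : ℕ∞ | ∃ rs : List R, (rs.length : ℕ∞) = n ∧ (∀ r ∈ rs, r ∈ I) ∧
    RingTheory.Sequence.IsWeaklyRegular M rs}

/-- `M` has finite projective dimension: it admits a projective resolution that
vanishes in all sufficiently large degrees. -/
def HasFiniteProjDim (R : Type u) [Ring R] (M : Type u) [AddCommGroup M] [Module R M] : Prop :=
  ∃ (n : ℕ) (P : ProjectiveResolution (ModuleCat.of R M)),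
    ∀ i : ℕ, n < i → IsZero (P.complex.X i)

section DepthHelpers

set_option linter.unusedSectionVars false

open CategoryTheory.Abelian

/-- Vanishing of `Ext^i(k, X)` for `i < n`. -/
def ExtVan (R : Type u) [CommRing R] [IsLocalRing R] (X : ModuleCat.{u} R) (n : ℕ) : Prop :=
  ∀ i < n, Subsingleton (Ext (ModuleCat.of R (ResidueField R)) X i)

variable {R : Type u} [CommRing R] [IsLocalRing R]

lemma ext_smul_eq_zero {X : ModuleCat.{u} R} {i : ℕ}
    (e : Ext (ModuleCat.of R (ResidueField R)) X i) {r : R} (hr : r ∈ maximalIdeal R) :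
    r • e = 0 := by
  have h : r • 𝟙 (ModuleCat.of R (ResidueField R)) = 0 := by
    ext x
    change r • (x : ResidueField R) = 0
    rw [Algebra.smul_def]
    have : algebraMap R (ResidueField R) r = 0 := by
      rw [ResidueField.algebraMap_eq]
      exact (residue_eq_zero_iff r).2 hr
    rw [this, zero_mul]
  have h2 : r • e = (Ext.mk₀ (r • 𝟙 (ModuleCat.of R (ResidueField R)))).comp e (zero_add i) := by
    rw [Ext.mk₀_smul, Ext.smul_comp, Ext.mk₀_id_comp]
  rw [h2, h, Ext.mk₀_zero, Ext.zero_comp]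

lemma ext_sub_X₃ {S : ShortComplex (ModuleCat.{u} R)} (hS : S.ShortExact) {K : ModuleCat.{u} R}
    {i : ℕ} (h2 : Subsingleton (Ext K S.X₂ i)) (h1 : Subsingleton (Ext K S.X₁ (i + 1))) :
    Subsingleton (Ext K S.X₃ i) := by
  refine subsingleton_of_forall_eq 0 fun e => ?_
  obtain ⟨x, rfl⟩ := Ext.covariant_sequence_exact₃ K hS e rfl (Subsingleton.elim _ _)
  rw [Subsingleton.elim x 0, Ext.zero_comp]

lemma ext_sub_X₁ {S : ShortComplex (ModuleCat.{u} R)} (hS : S.ShortExact) {K : ModuleCat.{u} R}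
    {i : ℕ} (h3 : Subsingleton (Ext K S.X₃ i))
    (h1 : ∀ e : Ext K S.X₁ (i + 1), e.comp (Ext.mk₀ S.f) (add_zero _) = 0) :
    Subsingleton (Ext K S.X₁ (i + 1)) := by
  refine subsingleton_of_forall_eq 0 fun e => ?_
  obtain ⟨x, rfl⟩ := Ext.covariant_sequence_exact₁ K hS e (h1 e) rfl
  rw [Subsingleton.elim x 0, Ext.zero_comp]

lemma ext_sub_X₁_zero {S : ShortComplex (ModuleCat.{u} R)} (hS : S.ShortExact)
    {K : ModuleCat.{u} R}
    (h1 : ∀ e : Ext K S.X₁ 0, e.comp (Ext.mk₀ S.f) (add_zero _) = 0) :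
    Subsingleton (Ext K S.X₁ 0) := by
  have := hS.mono_f
  refine subsingleton_of_forall_eq 0 fun e => ?_
  apply Ext.postcomp_mk₀_injective_of_mono K S.f
  simpa using h1 e

lemma extVan_of_iso {X Y : ModuleCat.{u} R} (e : X ≅ Y) {n : ℕ} (h : ExtVan R X n) :
    ExtVan R Y n := by
  intro i hi
  have := h i hi
  refine subsingleton_of_forall_eq 0 fun x => ?_
  have hx : x = (x.comp (Ext.mk₀ e.inv) (add_zero i)).comp (Ext.mk₀ e.hom) (add_zero i) := by
    simp
  rw [hx, Subsingleton.elim (x.comp (Ext.mk₀ e.inv) (add_zero i)) 0, Ext.zero_comp]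

lemma extVan_of_isWeaklyRegular (rs : List R) (N : Type u) [AddCommGroup N] [Module R N]
    (hrs : ∀ r ∈ rs, r ∈ maximalIdeal R) (h : IsWeaklyRegular N rs) :
    ExtVan R (ModuleCat.of R N) rs.length := by
  induction rs generalizing N with
  | nil => intro i hi; simp at hi
  | cons x rs ih =>
    rw [isWeaklyRegular_cons_iff] at h
    have hx : x ∈ maximalIdeal R := hrs x (by simp)
    have ihq := ih (QuotSMulTop x N) (fun r hr => hrs r (by simp [hr])) h.2
    have hS : ((ModuleCat.of R N).smulShortComplex x).ShortExact :=
      IsSMulRegular.smulShortComplex_shortExact (M := ModuleCat.of R N) h.1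
    have hz : ∀ i, ∀ e : Ext (ModuleCat.of R (ResidueField R))
        ((ModuleCat.of R N).smulShortComplex x).X₁ i,
        e.comp (Ext.mk₀ ((ModuleCat.of R N).smulShortComplex x).f) (add_zero _) = 0 := by
      intro i e
      rw [ModuleCat.smulShortComplex_f_eq_smul_id]
      have := ext_smul_eq_zero e hx
      rw [Ext.smul_eq_comp_mk₀] at this
      exact this
    intro i hi
    cases i with
    | zero => exact ext_sub_X₁_zero hS (hz 0)
    | succ i =>
      refine ext_sub_X₁ hS (ihq i ?_) (hz _)
      simpa using hi

lemma exists_isWeaklyRegular_of_extVan [IsNoetherianRing R] (n : ℕ) (N : Type u) [AddCommGroup N]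
    [Module R N] [Module.Finite R N] (h : ExtVan R (ModuleCat.of R N) n) :
    ∃ rs : List R, rs.length = n ∧ (∀ r ∈ rs, r ∈ maximalIdeal R) ∧ IsWeaklyRegular N rs := by
  induction n generalizing N with
  | zero => exact ⟨[], rfl, by simp, IsWeaklyRegular.nil R N⟩
  | succ n ih =>
    have h0 : Subsingleton (ResidueField R →ₗ[R] N) := by
      have := h 0 (by simp)
      have h1 : Subsingleton (ModuleCat.of R (ResidueField R) ⟶ ModuleCat.of R N) :=
        Ext.homEquiv₀.subsingleton_congr.mp this
      exact (ModuleCat.homEquiv (M := ModuleCat.of R (ResidueField R))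
        (N := ModuleCat.of R N)).subsingleton_congr.mp h1
    obtain ⟨x, hx, hreg⟩ := IsSMulRegular.subsingleton_linearMap_iff.1 h0
    have hxm : x ∈ maximalIdeal R := by
      have := Module.mem_annihilator.1 hx 1
      rw [Algebra.smul_def, mul_one, ResidueField.algebraMap_eq] at this
      exact (residue_eq_zero_iff x).1 this
    have hS : ((ModuleCat.of R N).smulShortComplex x).ShortExact :=
      IsSMulRegular.smulShortComplex_shortExact (M := ModuleCat.of R N) hreg
    obtain ⟨rs, hl, hm, hr⟩ := ih (QuotSMulTop x N) (fun i hi =>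
      ext_sub_X₃ hS (h i (by omega)) (h (i + 1) (by omega)))
    refine ⟨x :: rs, by simp [hl], ?_, (isWeaklyRegular_cons_iff _ _ _).2 ⟨hreg, hr⟩⟩
    intro r hr
    rcases List.mem_cons.1 hr with rfl | hr
    · exact hxm
    · exact hm r hr

lemma ExtVan.mono {X : ModuleCat.{u} R} {m n : ℕ} (h : ExtVan R X n) (hmn : m ≤ n) :
    ExtVan R X m := fun i hi => h i (by omega)

lemma le_rdepth_iff [IsNoetherianRing R] (n : ℕ) (N : Type u) [AddCommGroup N]
    [Module R N] [Module.Finite R N] :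
    (n : ℕ∞) ≤ rdepth (maximalIdeal R) N ↔ ExtVan R (ModuleCat.of R N) n := by
  constructor
  · intro h
    rcases Nat.eq_zero_or_pos n with rfl | hn
    · intro i hi; simp at hi
    have hlt1 : ((n - 1 : ℕ) : ℕ∞) < rdepth (maximalIdeal R) N :=
      lt_of_lt_of_le (by exact_mod_cast (by omega : n - 1 < n)) h
    obtain ⟨m, ⟨rs, rfl, hm, hr⟩, hlt⟩ := lt_sSup_iff.1 hlt1
    have : n - 1 < rs.length := by exact_mod_cast hlt
    exact (extVan_of_isWeaklyRegular rs N hm hr).mono (by omega)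
  · intro h
    obtain ⟨rs, hl, hm, hr⟩ := exists_isWeaklyRegular_of_extVan n N h
    exact le_sSup ⟨rs, by rw [hl], hm, hr⟩

lemma rdepth_eq_add [IsNoetherianRing R] (p : ℕ) (N T : Type u) [AddCommGroup N]
    [Module R N] [Module.Finite R N] [AddCommGroup T] [Module R T] [Module.Finite R T]
    (h : ∀ n, ExtVan R (ModuleCat.of R T) n ↔ ExtVan R (ModuleCat.of R N) (n + p)) :
    rdepth (maximalIdeal R) N = p + rdepth (maximalIdeal R) T := by
  simp only [← le_rdepth_iff] at h
  generalize rdepth (maximalIdeal R) N = a at *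
  generalize rdepth (maximalIdeal R) T = b at *
  refine le_antisymm ?_ ?_
  · refine ENat.forall_natCast_le_iff_le.1 fun m hm => ?_
    rcases le_total m p with hmp | hmp
    · exact le_trans (by exact_mod_cast hmp) le_self_add
    · obtain ⟨n, rfl⟩ := Nat.exists_eq_add_of_le hmp
      rw [add_comm p n] at hm
      have := (h n).2 hm
      push_cast
      gcongr
  · induction b with
    | top =>
      have : a = ⊤ := by
        refine top_le_iff.1 (ENat.forall_natCast_le_iff_le.1 fun m _ => ?_)
        exact le_trans (by exact_mod_cast Nat.le_add_right m p) ((h m).1 le_top)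
      simp [this]
    | coe b =>
      have := (h b).1 le_rfl
      rw [add_comm]
      exact_mod_cast this

section Chase

variable {K F M A B C D : Type u} [AddCommGroup K] [Module R K] [AddCommGroup F] [Module R F]
  [AddCommGroup M] [Module R M] [AddCommGroup A] [Module R A] [AddCommGroup B] [Module R B]
  [AddCommGroup C] [Module R C] [AddCommGroup D] [Module R D]

lemma lr_comm (f : K →ₗ[R] F) (g : A →ₗ[R] B) (x : K ⊗[R] A) :
    g.lTensor F (f.rTensor A x) = f.rTensor B (g.lTensor K x) := by
  rw [← LinearMap.comp_apply, ← LinearMap.comp_apply, LinearMap.lTensor_comp_rTensor,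
    LinearMap.rTensor_comp_lTensor]

lemma tor_chase (ι : K →ₗ[R] F) (f : F →ₗ[R] M) (hι : Function.Exact ι f)
    (hf : Function.Surjective f) (a : A →ₗ[R] B) (b : B →ₗ[R] C) (c : C →ₗ[R] D)
    (hM : Function.Exact (a.lTensor M) (b.lTensor M))
    (hF : Function.Exact (b.lTensor F) (c.lTensor F)) (hba : b ∘ₗ a = 0)
    (hC : Function.Injective (ι.rTensor C)) (z : K ⊗[R] C)
    (hz : c.lTensor F (ι.rTensor C z) = 0) : ∃ u, b.lTensor K u = z := by
  obtain ⟨w, hw⟩ := (hF _).1 hz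
  have hfι : f ∘ₗ ι = 0 := hι.linearMap_comp_eq_zero
  have h1 : b.lTensor M (f.rTensor B w) = 0 := by
    rw [lr_comm, hw, ← LinearMap.comp_apply, ← LinearMap.rTensor_comp, hfι]
    simp
  obtain ⟨v2, hv2⟩ := (hM _).1 h1
  obtain ⟨v, rfl⟩ := LinearMap.rTensor_surjective A hf v2
  have h2 : f.rTensor B (w - a.lTensor F v) = 0 := by
    rw [map_sub, ← lr_comm, hv2, sub_self]
  obtain ⟨u, hu⟩ := (rTensor_exact B hι hf _).1 h2
  refine ⟨u, hC ?_⟩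
  rw [← lr_comm, hu, map_sub, hw, ← LinearMap.comp_apply, ← LinearMap.lTensor_comp, hba]
  simp

end Chase

/-- A flat resolution of `N` witnessing `Tor_i(M, N) = 0` for all `i ≥ 1`. -/
def TorZ (M N : Type u) [AddCommGroup M] [Module R M] [AddCommGroup N] [Module R N] : Prop :=
  ∃ (P : ℕ → ModuleCat.{u} R) (d : ∀ i, P (i + 1) →ₗ[R] P i) (π : P 0 →ₗ[R] N),
    (∀ i, Module.Flat R (P i)) ∧ Function.Surjective π ∧ Function.Exact (d 0) π ∧
    (∀ i, Function.Exact (d (i + 1)) (d i)) ∧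
    ∀ i, Function.Exact ((d (i + 1)).lTensor M) ((d i).lTensor M)

lemma torZ_ker {F M N : Type u} [AddCommGroup M] [Module R M] [AddCommGroup N] [Module R N]
    [AddCommGroup F] [Module R F] [Module.Flat R F] (f : F →ₗ[R] M) (hf : Function.Surjective f)
    (h : TorZ (R := R) M N) :
    Function.Injective ((LinearMap.ker f).subtype.rTensor N) ∧
      TorZ (R := R) (LinearMap.ker f) N := by
  obtain ⟨P, d, π, hP, hπ, h0, hd, hM⟩ := h
  have hι : Function.Exact (LinearMap.ker f).subtype f := f.exact_subtype_ker_map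
  have hC : ∀ i, Function.Injective ((LinearMap.ker f).subtype.rTensor (P i)) := fun i =>
    Module.Flat.rTensor_preserves_injective_linearMap _ (LinearMap.ker f).injective_subtype
  have hdd : ∀ i, d i ∘ₗ d (i + 1) = 0 := fun i => (hd i).linearMap_comp_eq_zero
  refine ⟨?_, P, d, π, hP, hπ, h0, hd, ?_⟩
  · rw [injective_iff_map_eq_zero]
    intro z hz
    obtain ⟨z, rfl⟩ := LinearMap.lTensor_surjective (LinearMap.ker f) hπ z
    rw [← lr_comm] at hz
    obtain ⟨u, rfl⟩ := tor_chase _ f hι hf (d 1) (d 0) π (hM 0) (lTensor_exact F h0 hπ)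
      (hdd 0) (hC 0) z hz
    rw [← LinearMap.comp_apply, ← LinearMap.lTensor_comp, h0.linearMap_comp_eq_zero]
    simp
  · intro i z
    constructor
    · intro hz
      exact tor_chase _ f hι hf (d (i + 2)) (d (i + 1)) (d i) (hM (i + 1))
        (Module.Flat.lTensor_exact F (hd i)) (hdd (i + 1)) (hC (i + 1)) z
        (by rw [lr_comm, hz, map_zero])
    · rintro ⟨u, rfl⟩
      rw [← LinearMap.comp_apply, ← LinearMap.lTensor_comp, hdd]
      simp

lemma hom_mem_smul_top {K F : Type u} [AddCommGroup K] [Module R K] [AddCommGroup F] [Module R F]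
    [Module.Free R K] [Module.Finite R K] (I : Ideal R) (φ : K →ₗ[R] F)
    (h : ∀ x, φ x ∈ I • (⊤ : Submodule R F)) : φ ∈ I • (⊤ : Submodule R (K →ₗ[R] F)) := by
  let b := Module.Free.chooseBasis R K
  have h1 : φ = ∑ j, (LinearMap.smulRightₗ (b.coord j)) (φ (b j)) := by
    refine b.ext fun i => ?_
    simp [LinearMap.sum_apply, Finsupp.single_apply]
  rw [h1]
  refine Submodule.sum_mem _ fun j _ => ?_
  have h2 := Submodule.mem_map_of_mem (f := LinearMap.smulRightₗ (M := F) (b.coord j)) (h (b j))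
  rw [Submodule.map_smul''] at h2
  exact Submodule.smul_mono le_rfl le_top h2

lemma exists_minimal_cover (M : Type u) [AddCommGroup M] [Module R M] [Module.Finite R M] :
    ∃ (n : ℕ) (f : (Fin n → R) →ₗ[R] M), Function.Surjective f ∧
      ∀ x ∈ LinearMap.ker f, x ∈ maximalIdeal R • (⊤ : Submodule R (Fin n → R)) := by
  let w := Module.finBasis (ResidueField R) (ResidueField R ⊗[R] M)
  obtain ⟨v, hv⟩ := (TensorProduct.mk_surjective R M (ResidueField R)
    Ideal.Quotient.mk_surjective).comp_left w
  refine ⟨_, Fintype.linearCombination R v, ?_, ?_⟩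
  · rw [← LinearMap.range_eq_top, Fintype.range_linearCombination]
    exact IsLocalRing.span_eq_top_of_tmul_eq_basis _ w (congr_fun hv)
  · intro c hc
    have h1 : ∀ i, c i ∈ maximalIdeal R := by
      have h2 : ∑ i, (residue R (c i)) • w i = 0 := by
        have h3 := congrArg (TensorProduct.mk R (ResidueField R) M 1) (LinearMap.mem_ker.1 hc)
        rw [Fintype.linearCombination_apply, map_sum, map_zero] at h3
        rw [← h3]
        refine Finset.sum_congr rfl fun i _ => ?_
        rw [map_smul, ← congr_fun hv i, ← ResidueField.algebraMap_eq, algebraMap_smul]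
        rfl
      intro i
      exact (residue_eq_zero_iff _).1 (Fintype.linearIndependent_iff.1 w.linearIndependent _ h2 i)
    have h4 : c = ∑ i, c i • (Pi.single i (1 : R) : Fin _ → R) := by
      ext j
      simp [Finset.sum_apply, Pi.single_apply]
    rw [h4]
    exact Submodule.sum_mem _ fun i _ => Submodule.smul_mem_smul (h1 i) trivial

/-- Pushing forward an `Ext` class along `φ ⊗ N`, linearly in `φ`. -/
noncomputable def extPush {X : ModuleCat.{u} R} (A B N : Type u) [AddCommGroup A] [Module R A]
    [AddCommGroup B] [Module R B] [AddCommGroup N] [Module R N] {i : ℕ}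
    (e : Ext X (ModuleCat.of R (A ⊗[R] N)) i) :
    (A →ₗ[R] B) →ₗ[R] Ext X (ModuleCat.of R (B ⊗[R] N)) i where
  toFun φ := e.comp (Ext.mk₀ (ModuleCat.ofHom (φ.rTensor N))) (add_zero i)
  map_add' φ ψ := by
    rw [LinearMap.rTensor_add, ← Ext.comp_add, ← Ext.mk₀_add]
    rfl
  map_smul' r φ := by
    rw [LinearMap.rTensor_smul, RingHom.id_apply, ← Ext.comp_smul, ← Ext.mk₀_smul]
    rfl

lemma extPush_apply {X : ModuleCat.{u} R} (A B N : Type u) [AddCommGroup A] [Module R A]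
    [AddCommGroup B] [Module R B] [AddCommGroup N] [Module R N] {i : ℕ}
    (e : Ext X (ModuleCat.of R (A ⊗[R] N)) i) (φ : A →ₗ[R] B) :
    extPush A B N e φ = e.comp (Ext.mk₀ (ModuleCat.ofHom (φ.rTensor N))) (add_zero i) := rfl

lemma extPush_comp {X : ModuleCat.{u} R} (A B C N : Type u) [AddCommGroup A] [Module R A]
    [AddCommGroup B] [Module R B] [AddCommGroup C] [Module R C] [AddCommGroup N] [Module R N]
    {i : ℕ} (e : Ext X (ModuleCat.of R (A ⊗[R] N)) i) (φ : A →ₗ[R] B) (ψ : B →ₗ[R] C) :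
    extPush A C N e (ψ ∘ₗ φ) = extPush B C N (extPush A B N e φ) ψ := by
  simp only [extPush_apply, LinearMap.rTensor_comp, ModuleCat.ofHom_comp]
  rw [← Ext.mk₀_comp_mk₀, Ext.comp_assoc_of_third_deg_zero]

lemma extPush_id {X : ModuleCat.{u} R} (A N : Type u) [AddCommGroup A] [Module R A]
    [AddCommGroup N] [Module R N] {i : ℕ} (e : Ext X (ModuleCat.of R (A ⊗[R] N)) i) :
    extPush A A N e LinearMap.id = e := by
  rw [extPush_apply, LinearMap.rTensor_id, ModuleCat.ofHom_id, Ext.comp_mk₀_id]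

lemma extPush_eq_zero {K F N : Type u} [AddCommGroup K] [Module R K] [AddCommGroup F] [Module R F]
    [AddCommGroup N] [Module R N] [Module.Free R K] [Module.Finite R K] (φ : K →ₗ[R] F)
    (h : ∀ x, φ x ∈ maximalIdeal R • (⊤ : Submodule R F)) {i : ℕ}
    (e : Ext (ModuleCat.of R (ResidueField R)) (ModuleCat.of R (K ⊗[R] N)) i) :
    extPush K F N e φ = 0 := by
  refine Submodule.smul_induction_on (hom_mem_smul_top _ φ h) ?_ ?_
  · intro r hr ψ _
    rw [map_smul, ext_smul_eq_zero _ hr]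
  · intro x y hx hy
    rw [map_add, hx, hy, add_zero]

lemma extVan_free_iff (F N : Type u) [AddCommGroup F] [Module R F] [AddCommGroup N] [Module R N]
    [Module.Free R F] [Module.Finite R F] [Nontrivial F] (n : ℕ) :
    ExtVan R (ModuleCat.of R (F ⊗[R] N)) n ↔ ExtVan R (ModuleCat.of R N) n := by
  let b := Module.Free.chooseBasis R F
  have hR : ExtVan R (ModuleCat.of R (R ⊗[R] N)) n ↔ ExtVan R (ModuleCat.of R N) n :=
    ⟨extVan_of_iso (TensorProduct.lid R N).toModuleIso,
      extVan_of_iso (TensorProduct.lid R N).toModuleIso.symm⟩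
  rw [← hR]
  constructor
  · intro h i hi
    have := h i hi
    obtain ⟨j⟩ : Nonempty (Module.Free.ChooseBasisIndex R F) := inferInstance
    refine subsingleton_of_forall_eq 0 fun e => ?_
    have h1 : (LinearMap.id : R →ₗ[R] R) =
        b.coord j ∘ₗ (LinearMap.toSpanSingleton R F (b j)) := by
      ext; simp
    rw [← extPush_id R N e, h1, extPush_comp,
      Subsingleton.elim (extPush R F N e (LinearMap.toSpanSingleton R F (b j))) 0,
      extPush_apply, Ext.zero_comp]
  · intro h i hi
    have := h i hi
    refine subsingleton_of_forall_eq 0 fun e => ?_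
    have h1 : (LinearMap.id : F →ₗ[R] F) =
        ∑ j, (LinearMap.toSpanSingleton R F (b j)) ∘ₗ b.coord j := by
      refine b.ext fun i => ?_
      simp [LinearMap.sum_apply, Finsupp.single_apply]
    rw [← extPush_id F N e, h1, map_sum]
    refine Finset.sum_eq_zero fun j _ => ?_
    rw [extPush_comp, Subsingleton.elim (extPush F R N e (b.coord j)) 0,
      extPush_apply, Ext.zero_comp]

/-- The short exact sequence `0 → K ⊗ N → F ⊗ N → M ⊗ N → 0`. -/
noncomputable def tensorSC {F M : Type u} (N : Type u) [AddCommGroup M] [Module R M]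
    [AddCommGroup N] [Module R N] [AddCommGroup F] [Module R F] (f : F →ₗ[R] M) :
    ShortComplex (ModuleCat.{u} R) :=
  ModuleCat.shortComplexOfCompEqZero ((LinearMap.ker f).subtype.rTensor N) (f.rTensor N) (by
    rw [← LinearMap.rTensor_comp, f.exact_subtype_ker_map.linearMap_comp_eq_zero]
    simp)

lemma tensorSC_shortExact {F M N : Type u} [AddCommGroup M] [Module R M]
    [AddCommGroup N] [Module R N] [AddCommGroup F] [Module R F] (f : F →ₗ[R] M)
    (hf : Function.Surjective f)
    (hi : Function.Injective ((LinearMap.ker f).subtype.rTensor N)) :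
    (tensorSC N f).ShortExact where
  exact := ModuleCat.shortComplex_exact _ (rTensor_exact N f.exact_subtype_ker_map hf)
  mono_f := (ModuleCat.mono_iff_injective _).mpr hi
  epi_g := (ModuleCat.epi_iff_surjective _).mpr (LinearMap.rTensor_surjective N hf)

lemma main_induction [IsNoetherianRing R] (n : ℕ) (M : Type u) [AddCommGroup M] [Module R M]
    [Module.Finite R M] [Nontrivial M] (h : HasProjectiveDimensionLT (ModuleCat.of R M) (n + 1)) :
    ∃ p : ℕ, (p = 0 → Module.Free R M) ∧
      ∀ (N : Type u) [AddCommGroup N] [Module R N], TorZ (R := R) M N →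
        ∀ m, ExtVan R (ModuleCat.of R (M ⊗[R] N)) m ↔ ExtVan R (ModuleCat.of R N) (m + p) := by
  induction n generalizing M with
  | zero =>
    have : Projective (ModuleCat.of R M) := projective_iff_hasProjectiveDimensionLT_one.2 h
    have : Module.Projective R M := (IsProjective.iff_projective M).2 this
    have : Module.Free R M := Module.free_of_flat_of_isLocalRing
    exact ⟨0, fun _ => this, fun N _ _ _ m => extVan_free_iff M N m⟩
  | succ n ih =>
    by_cases hfree : Module.Free R M
    · exact ⟨0, fun _ => hfree, fun N _ _ _ m => extVan_free_iff M N m⟩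
    obtain ⟨q, f, hf, hmin⟩ := exists_minimal_cover (R := R) M
    have hF : Nontrivial (Fin q → R) := hf.nontrivial
    have hK : Nontrivial (LinearMap.ker f) := by
      by_contra hK
      rw [not_nontrivial_iff_subsingleton, Submodule.subsingleton_iff_eq_bot,
        LinearMap.ker_eq_bot] at hK
      exact hfree (Module.Free.of_equiv (LinearEquiv.ofBijective f ⟨hK, hf⟩))
    have hpd : HasProjectiveDimensionLT (ModuleCat.of R (LinearMap.ker f)) (n + 1) :=
      ((LinearMap.shortExact_shortComplexKer hf).hasProjectiveDimensionLT_X₃_iff n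
        (ModuleCat.projective_of_free (Pi.basisFun R (Fin q)))).1 h
    by_cases hKf : Module.Free R (LinearMap.ker f)
    · refine ⟨1, by simp, fun N _ _ hN m => ?_⟩
      have hS := tensorSC_shortExact f hf (torZ_ker f hf hN).1
      have hz : ∀ i, ∀ e : Ext (ModuleCat.of R (ResidueField R)) (tensorSC N f).X₁ i,
          e.comp (Ext.mk₀ (tensorSC N f).f) (add_zero _) = 0 := by
        intro i e
        exact extPush_eq_zero (LinearMap.ker f).subtype (fun x => hmin x x.2) e
      constructor
      · intro hm
        rw [← extVan_free_iff (LinearMap.ker f) N]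
        intro i hi
        cases i with
        | zero => exact ext_sub_X₁_zero hS (hz 0)
        | succ i => exact ext_sub_X₁ hS (hm i (by omega)) (hz _)
      · intro hm i hi
        exact ext_sub_X₃ hS ((extVan_free_iff (Fin q → R) N _).2 hm i (by omega))
          ((extVan_free_iff (LinearMap.ker f) N _).2 hm (i + 1) (by omega))
    · obtain ⟨p, hp, hpN⟩ := ih (LinearMap.ker f) hpd
      have hp0 : p ≠ 0 := fun h => hKf (hp h)
      refine ⟨p + 1, by simp, fun N _ _ hN m => ?_⟩
      obtain ⟨hinj, hT⟩ := torZ_ker f hf hN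
      have hS := tensorSC_shortExact f hf hinj
      have key := hpN N hT
      constructor
      · intro hm
        have : ∀ j ≤ m + 1, ExtVan R (ModuleCat.of R (LinearMap.ker f ⊗[R] N)) j := by
          intro j
          induction j with
          | zero => intro _ i hi; simp at hi
          | succ j ihj =>
            intro hj i hi
            rcases Nat.lt_succ_iff_lt_or_eq.1 hi with hi | rfl
            · exact ihj (by omega) i hi
            have h2 : Subsingleton (Ext (ModuleCat.of R (ResidueField R)) (tensorSC N f).X₂ i) :=
              (extVan_free_iff (Fin q → R) N _).2 ((key i).1 (ihj (by omega))) i (by omega)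
            cases i with
            | zero => exact ext_sub_X₁_zero hS (fun e => Subsingleton.elim _ _)
            | succ i =>
              exact ext_sub_X₁ hS (hm i (by omega)) (fun e => Subsingleton.elim _ _)
        have h3 := (key (m + 1)).1 (this _ le_rfl)
        exact h3.mono (by omega)
      · intro hm i hi
        exact ext_sub_X₃ hS ((extVan_free_iff (Fin q → R) N _).2 hm i (by omega))
          ((key (m + 1)).2 (hm.mono (by omega)) (i + 1) (by omega))

lemma torZ_of_tor (M N : Type u) [AddCommGroup M] [Module R M] [AddCommGroup N] [Module R N]
    (htor : ∀ i : ℕ, 1 ≤ i →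
      IsZero (((Tor (ModuleCat R) i).obj (ModuleCat.of R M)).obj (ModuleCat.of R N))) :
    TorZ (R := R) M N := by
  let P := projectiveResolution (ModuleCat.of R N)
  refine ⟨P.complex.X, fun i => (P.complex.d (i + 1) i).hom, (P.π.f 0).hom, ?_, ?_, ?_, ?_, ?_⟩
  · intro i
    have : Module.Projective R (P.complex.X i) :=
      (IsProjective.iff_projective _).2 (P.projective i)
    infer_instance
  · exact (ModuleCat.epi_iff_surjective (P.π.f 0)).1 inferInstance
  · have := ShortComplex.exact_of_g_is_cokernel
      (ShortComplex.mk (P.complex.d 1 0) (P.π.f 0) P.complex_d_comp_π_f_zero)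
      P.isColimitCokernelCofork
    exact (ShortComplex.ShortExact.moduleCat_exact_iff_function_exact _).1 this
  · intro i
    exact (ShortComplex.ShortExact.moduleCat_exact_iff_function_exact _).1 (P.exact_succ i)
  · intro i
    have h1 := (htor (i + 1) (by omega)).of_iso
      (P.isoLeftDerivedObj ((MonoidalCategory.tensoringLeft _).obj (ModuleCat.of R M)) (i + 1)).symm
    have h2 := (HomologicalComplex.exactAt_iff_isZero_homology _ _).2 h1
    have h3 := (HomologicalComplex.exactAt_iff' _ (i + 2) (i + 1) i
      (by simp only [ChainComplex.prev]; rfl) (by simp)).1 h2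
    exact (ShortComplex.ShortExact.moduleCat_exact_iff_function_exact _).1 h3

lemma exists_pd {M : Type u} [AddCommGroup M] [Module R M] (h : HasFiniteProjDim R M) :
    ∃ n, HasProjectiveDimensionLT (ModuleCat.of R M) (n + 1) := by
  obtain ⟨n, P, hP⟩ := h
  refine ⟨n, HasProjectiveDimensionLT.mk fun i hi Y e => ?_⟩
  obtain ⟨f, hf, rfl⟩ := P.extMk_surjective e (i + 1) rfl
  obtain rfl : f = 0 := (hP i (by omega)).eq_of_src _ _
  simp

end DepthHelpers

/-- The depth formula: if `Tor_i(M,N) = 0` for all `i ≥ 1` and `pd_R M < ∞`, then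
`depth M + depth N = depth R + depth (M ⊗ N)`. -/
theorem stmt10 {R : Type u} [CommRing R] [IsNoetherianRing R] [IsLocalRing R]
    (M N : Type u) [AddCommGroup M] [Module R M] [Module.Finite R M] [Nontrivial M]
    [AddCommGroup N] [Module R N] [Module.Finite R N] [Nontrivial N]
    (htor : ∀ i : ℕ, 1 ≤ i →
      IsZero (((Tor (ModuleCat R) i).obj (ModuleCat.of R M)).obj (ModuleCat.of R N)))
    (hpd : HasFiniteProjDim R M) :
    rdepth (maximalIdeal R) M + rdepth (maximalIdeal R) N =
      rdepth (maximalIdeal R) R + rdepth (maximalIdeal R) (M ⊗[R] N) := by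
  obtain ⟨n, hn⟩ := exists_pd hpd
  obtain ⟨p, -, hp⟩ := main_induction n M hn
  have hN := rdepth_eq_add p N (M ⊗[R] N) (hp N (torZ_of_tor M N htor))
  have hTR : TorZ (R := R) M R := torZ_of_tor M R fun i hi => by
    obtain ⟨j, rfl⟩ := Nat.exists_eq_add_of_le' hi
    have : Projective (ModuleCat.of R R) := (IsProjective.iff_projective R).1 inferInstance
    exact isZero_Tor_succ_of_projective (ModuleCat R) _ _ j
  have hR := rdepth_eq_add p R M fun m => by
    rw [← hp R hTR m]
    exact ⟨extVan_of_iso (TensorProduct.rid R M).toModuleIso.symm,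
      extVan_of_iso (TensorProduct.rid R M).toModuleIso⟩
  rw [hN, hR]
  ring
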